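/- Let f : {1, …, n} → {1, …, n} be chosen uniformly at random, and let Z_n be the number of cycles of its functional graph, i.e. the number of orbits of f restricted to its periodic points. Then the probability that Z_n > 5 ln n is o(1/n⁴); that is, n⁴ · P(Z_n > 5 ln n) → 0 as n → ∞. -/

import Mathlib

/-!
The idea is to bound `E[5 ^ Z_n]`. A colouring `c` of the points by five colours with `c ∘ f = c`
amounts to a free choice of colour for each cycle of `f`, so `f` has `5 ^ Z_n` invariant colourings.
Count the pairs `(f, c)` with `c ∘ f = c` the other way: for a fixed `c` whose colour classes have
sizes `m`, there are `∏ q, m (c q)` such `f`, and summing this over the colourings with the same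
class sizes gives at most `(∑ i, m i) ^ n = n ^ n`. As there are `O(n ^ 4)` possible class sizes for
five colours, `E[5 ^ Z_n] = O(n ^ 4)`, and Markov's inequality gives
`P(Z_n > 5 ln n) = O(n ^ (4 - 5 ln 5))`, where `5 ln 5 > 8`.
-/

open scoped Classical in
/-- The number of cycles of the functional graph of `f : Fin n → Fin n`: the number
of orbits of `f` restricted to its periodic points (each periodic point is mapped to
its orbit `{f^[t] q : t ∈ ℕ}`, and distinct orbits are counted). -/
noncomputable def cycleCount (n : ℕ) (f : Fin n → Fin n) : ℕ :=
  ((Finset.univ.filter fun q : Fin n => ∃ t : ℕ, 1 ≤ t ∧ f^[t] q = q).image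
    fun q => Finset.univ.filter fun p : Fin n => ∃ t : ℕ, f^[t] q = p).card

open scoped Classical in
/-- The probability that a uniformly random map `f : {1,…,n} → {1,…,n}` has more
than `5 ln n` cycles in its functional graph. -/
noncomputable def probManyCycles (n : ℕ) : ℝ :=
  ((Finset.univ.filter fun f : Fin n → Fin n =>
      5 * Real.log n < (cycleCount n f : ℝ)).card : ℝ) /
    (Fintype.card (Fin n → Fin n) : ℝ)

section Orbits

variable {α : Type*}

/-- The cycle of the functional graph of `f` which the orbit of `x` eventually enters, encoded as
the set of periodic points reachable from `x`; it is empty if the orbit never becomes periodic. -/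
def terminalCycle (f : α → α) (x : α) : Set α :=
  {y ∈ Function.periodicPts f | ∃ t : ℕ, f^[t] x = y}

lemma terminalCycle_comp_self (f : α → α) : terminalCycle f ∘ f = terminalCycle f := by
  funext x
  ext y
  refine and_congr_right fun hy => ⟨fun ⟨t, ht⟩ => ⟨t + 1, ht⟩, ?_⟩
  rintro ⟨_ | t, ht⟩
  · obtain rfl : x = y := ht
    obtain ⟨s, hs, hperiod⟩ := hy
    obtain ⟨r, rfl⟩ := Nat.exists_eq_succ_of_ne_zero hs.ne'
    exact ⟨r, hperiod⟩
  · exact ⟨t, ht⟩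

lemma terminalCycle_iterate (f : α → α) (t : ℕ) (x : α) :
    terminalCycle f (f^[t] x) = terminalCycle f x := by
  induction t generalizing x with
  | zero => rfl
  | succ t ih => exact (ih (f x)).trans (congrFun (terminalCycle_comp_self f) x)

lemma terminalCycle_of_mem_periodicPts {f : α → α} {x : α} (hx : x ∈ Function.periodicPts f) :
    terminalCycle f x = {y | ∃ t : ℕ, f^[t] x = y} := by
  obtain ⟨s, hs, hperiod⟩ := hx
  refine Set.ext fun y => and_iff_right_of_imp ?_
  rintro ⟨t, rfl⟩
  exact ⟨s, hs, hperiod.apply_iterate t⟩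

lemma exists_iterate_mem_periodicPts [Finite α] (f : α → α) (x : α) :
    ∃ t : ℕ, f^[t] x ∈ Function.periodicPts f := by
  obtain ⟨s, t, hst, heq⟩ :=
    (Set.finite_univ (α := α)).exists_lt_map_eq_of_forall_mem fun t : ℕ => Set.mem_univ (f^[t] x)
  refine ⟨s, t - s, Nat.sub_pos_of_lt hst, ?_⟩
  rw [Function.IsPeriodicPt, Function.IsFixedPt, ← Function.iterate_add_apply,
    Nat.sub_add_cancel hst.le, heq]

lemma image_terminalCycle_periodicPts [Finite α] (f : α → α) :
    terminalCycle f '' Function.periodicPts f = Set.range (terminalCycle f) := by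
  refine (Set.image_subset_range _ _).antisymm ?_
  rintro _ ⟨x, rfl⟩
  obtain ⟨t, ht⟩ := exists_iterate_mem_periodicPts f x
  exact ⟨f^[t] x, ht, terminalCycle_iterate f t x⟩

end Orbits

section Colorings

open Finset

variable {α κ : Type*} [Fintype α] [DecidableEq κ]

lemma card_pow_ncard_range_le_card_invariant_colorings [DecidableEq α] [Fintype κ] {β : Type*}
    {f : α → α} {g : α → β} (hg : g ∘ f = g) :
    Fintype.card κ ^ (Set.range g).ncard ≤ #{c : α → κ | c ∘ f = c} := by
  classical
  rw [Set.ncard_eq_toFinset_card', Set.toFinset_card, ← Fintype.card_fun, ← card_univ]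
  refine card_le_card_of_injOn (· ∘ Set.rangeFactorization g) (fun c _ => ?_)
    Set.rangeFactorization_surjective.injective_comp_right.injOn
  have hinvariant : Set.rangeFactorization g ∘ f = Set.rangeFactorization g :=
    funext fun x => Subtype.ext (congrFun hg x)
  simp [Function.comp_assoc, hinvariant]

lemma card_filter_comp_eq {ι : Type*} [Fintype ι] [DecidableEq ι] (c : α → κ) (d : ι → κ) :
    #{f : ι → α | c ∘ f = d} = ∏ i, #{p | c p = d i} := by
  rw [← Fintype.card_piFinset]
  congr 1
  ext f
  simp [funext_iff]

/-- The sizes of the colour classes of a colouring `c`, encoded as the multiset of its values, in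
which the colour `i` has multiplicity `#{p | c p = i}`. -/
def colorProfile (c : α → κ) : Sym κ (Fintype.card α) :=
  ⟨univ.val.map c, by simp⟩

lemma count_colorProfile (c : α → κ) (i : κ) :
    (colorProfile c : Multiset κ).count i = #{p | c p = i} := by
  simp [colorProfile, Multiset.count_map, Finset.card_def, eq_comm]

variable [DecidableEq α] [Fintype κ]

lemma sum_prod_count_sym {m : ℕ} (σ : Sym κ m) :
    ∑ c : α → κ, ∏ q, (σ : Multiset κ).count (c q) = m ^ Fintype.card α := by
  rw [← Fintype.piFinset_univ, sum_prod_piFinset univ fun _ i => (σ : Multiset κ).count i,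
    prod_const, card_univ, Multiset.sum_count_eq_card fun _ _ => mem_univ _, Sym.card_coe]

lemma sum_prod_card_fiber_le :
    ∑ c : α → κ, ∏ q, #{p | c p = c q}
      ≤ (Fintype.card κ).multichoose (Fintype.card α) * Fintype.card α ^ Fintype.card α := by
  rw [← Sym.card_sym_eq_multichoose, ← smul_eq_mul, ← card_univ, ← sum_const,
    ← sum_fiberwise univ colorProfile]
  refine sum_le_sum fun σ _ => ?_
  calc ∑ c with colorProfile c = σ, ∏ q, #{p | c p = c q}
      = ∑ c : α → κ with colorProfile c = σ, ∏ q, (σ : Multiset κ).count (c q) := by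
        refine sum_congr rfl fun c hc => ?_
        simp only [← (mem_filter.mp hc).2, count_colorProfile]
    _ ≤ ∑ c : α → κ, ∏ q, (σ : Multiset κ).count (c q) := sum_le_sum_of_subset (filter_subset _ _)
    _ = Fintype.card α ^ Fintype.card α := sum_prod_count_sym σ

lemma sum_card_invariant_colorings_le :
    ∑ f : α → α, #{c : α → κ | c ∘ f = c}
      ≤ (Fintype.card κ).multichoose (Fintype.card α) * Fintype.card α ^ Fintype.card α :=
  calc ∑ f : α → α, #{c : α → κ | c ∘ f = c}
      = ∑ c : α → κ, #{f : α → α | c ∘ f = c} :=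
        sum_card_bipartiteAbove_eq_sum_card_bipartiteBelow fun f c => c ∘ f = c
    _ = ∑ c : α → κ, ∏ q, #{p | c p = c q} := sum_congr rfl fun c _ => card_filter_comp_eq c c
    _ ≤ _ := sum_prod_card_fiber_le

end Colorings

lemma multichoose_succ_le_pow (k n : ℕ) : (k + 1).multichoose n ≤ (n + 1) ^ k := by
  induction k generalizing n with
  | zero => simp
  | succ k ihk =>
    induction n with
    | zero => simp
    | succ n ihn =>
      calc (k + 1 + 1).multichoose (n + 1)
          = (k + 1).multichoose (n + 1) + (k + 1 + 1).multichoose n :=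
            Nat.multichoose_succ_succ _ _
        _ ≤ (n + 1 + 1) ^ k + (n + 1) ^ (k + 1) := add_le_add (ihk _) ihn
        _ ≤ (n + 1 + 1) ^ k + (n + 1 + 1) ^ k * (n + 1) := by
            rw [pow_succ (n + 1)]
            gcongr
            exact Nat.le_succ _
        _ = (n + 1 + 1) ^ (k + 1) := by ring

lemma card_filter_lt_mul_rpow_le_sum_pow {ι : Type*} (s : Finset ι) (X : ι → ℕ) (a : ℝ) {b : ℝ}
    (hb : 1 ≤ b) : ({i ∈ s | a < X i}.card : ℝ) * b ^ a ≤ ∑ i ∈ s, b ^ X i := by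
  have hb0 : 0 ≤ b := zero_le_one.trans hb
  rw [← nsmul_eq_mul]
  refine (Finset.card_nsmul_le_sum _ (fun i => b ^ X i) _ fun i hi => ?_).trans
    (Finset.sum_le_sum_of_subset_of_nonneg (Finset.filter_subset _ _) fun _ _ _ => pow_nonneg hb0 _)
  rw [← Real.rpow_natCast]
  exact Real.rpow_le_rpow_of_exponent_le hb (Finset.mem_filter.mp hi).2.le

lemma cycleCount_eq_ncard_range_terminalCycle (n : ℕ) (f : Fin n → Fin n) :
    cycleCount n f = (Set.range (terminalCycle f)).ncard := by
  rw [cycleCount, ← Set.ncard_coe_finset,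
    ← Set.ncard_image_of_injective _ Finset.coe_injective, ← image_terminalCycle_periodicPts,
    Finset.coe_image, Set.image_image, Finset.coe_filter_univ]
  congr 1
  refine Set.image_congr fun q hq => ?_
  rw [terminalCycle_of_mem_periodicPts hq, Finset.coe_filter_univ]

lemma sum_pow_cycleCount_le (n k : ℕ) :
    ∑ f : Fin n → Fin n, k ^ cycleCount n f ≤ k.multichoose n * n ^ n := by
  refine le_trans (Finset.sum_le_sum fun f _ => ?_)
    (by simpa only [Fintype.card_fin] using
      sum_card_invariant_colorings_le (α := Fin n) (κ := Fin k))
  simpa only [cycleCount_eq_ncard_range_terminalCycle, Fintype.card_fin] using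
    card_pow_ncard_range_le_card_invariant_colorings (κ := Fin k) (terminalCycle_comp_self f)

lemma probManyCycles_le_multichoose_div (n : ℕ) {k : ℕ} (hk : 0 < k) :
    probManyCycles n ≤ k.multichoose n / (k : ℝ) ^ (5 * Real.log n) := by
  have hcard : (Fintype.card (Fin n → Fin n) : ℝ) = (n : ℝ) ^ n := by simp
  have hpos : (0 : ℝ) < (n : ℝ) ^ n := mod_cast Nat.pow_self_pos
  rw [probManyCycles, hcard, div_le_div_iff₀ hpos (by positivity)]
  calc _ ≤ ∑ f : Fin n → Fin n, (k : ℝ) ^ cycleCount n f :=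
        card_filter_lt_mul_rpow_le_sum_pow _ _ _ (mod_cast hk)
    _ ≤ _ := mod_cast sum_pow_cycleCount_le n k

lemma probManyCycles_le_rpow {n : ℕ} (hn : 0 < n) (k : ℕ) :
    probManyCycles n ≤ 2 ^ k * (n : ℝ) ^ (k - 5 * Real.log (k + 1)) := by
  have hn0 : (0 : ℝ) < n := mod_cast hn
  have hchoose : ((k + 1).multichoose n : ℝ) ≤ 2 ^ k * (n : ℝ) ^ k := by
    rw [← mul_pow]
    exact_mod_cast (multichoose_succ_le_pow k n).trans (Nat.pow_le_pow_left (by omega) k)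
  have hbase : ((k + 1 : ℕ) : ℝ) ^ (5 * Real.log n) = (n : ℝ) ^ (5 * Real.log (k + 1)) := by
    rw [Real.rpow_def_of_pos (by positivity), Real.rpow_def_of_pos hn0]
    push_cast
    ring_nf
  calc probManyCycles n
      ≤ (k + 1).multichoose n / ((k + 1 : ℕ) : ℝ) ^ (5 * Real.log n) :=
        probManyCycles_le_multichoose_div n k.succ_pos
    _ ≤ 2 ^ k * (n : ℝ) ^ k / (n : ℝ) ^ (5 * Real.log (k + 1)) := by
        rw [hbase]
        gcongr
    _ = 2 ^ k * (n : ℝ) ^ (k - 5 * Real.log (k + 1)) := by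
        rw [Real.rpow_sub hn0, Real.rpow_natCast, mul_div_assoc]

/-- The functional graph of a uniformly random map on `{1,…,n}` has at most `5 ln n`
cycles with probability `1 − o(1/n⁴)`: that is, `n⁴ · P(Z_n > 5 ln n) → 0`. -/
theorem probManyCycles_little_o :
    Filter.Tendsto (fun n : ℕ => (n : ℝ) ^ 4 * probManyCycles n)
      Filter.atTop (nhds 0) := by
  have hexponent : 0 < 5 * Real.log 5 - 8 := by linarith [Real.log_five_gt_d9]
  have hlim : Filter.Tendsto (fun n : ℕ => 2 ^ 4 * (n : ℝ) ^ (-(5 * Real.log 5 - 8)))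
      Filter.atTop (nhds 0) := by
    simpa using ((tendsto_rpow_neg_atTop hexponent).comp
      tendsto_natCast_atTop_atTop).const_mul (2 ^ 4 : ℝ)
  refine squeeze_zero' (.of_forall fun n => by unfold probManyCycles; positivity) ?_ hlim
  filter_upwards [Filter.eventually_gt_atTop 0] with n hn
  have hn0 : (0 : ℝ) < n := mod_cast hn
  -- Five colours because `k - 5 * log (k + 1)` is smallest among naturals at `k = 4`.
  calc (n : ℝ) ^ 4 * probManyCycles n
      ≤ (n : ℝ) ^ 4 * (2 ^ 4 * (n : ℝ) ^ ((4 : ℕ) - 5 * Real.log ((4 : ℕ) + 1))) := by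
        gcongr
        exact probManyCycles_le_rpow hn 4
    _ = 2 ^ 4 * (n : ℝ) ^ (-(5 * Real.log 5 - 8)) := by
        rw [mul_left_comm, ← Real.rpow_natCast (n : ℝ), ← Real.rpow_add hn0]
        congr 2
        push_cast
        ring_nf
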